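/- Let n ≥ 0 and I, J ∈ P_n with (BM_n)_{I,J} ≠ 0 (equivalently, J ⊆ I and fin(J) = fin(I), where fin(I) := max{0 ≤ i ≤ n : i ∉ I}). Let J_1, …, J_t be the runs of J, J_k = {m_k+1, …, m_k+ℓ_k}, set c_k(I) = 0 if m_k ∈ I and 1 otherwise, and let t′ = t − 1 if n ∈ I and t′ = t otherwise. Then (BM_n)_{I,J} = (−1)^{|J|} · ∏_{k=1}^{t′} (|J_k| + 1)^{c_k(I)}. -/

import Mathlib

/-! Write `AM = A_n M_n` and `BM = B_n M_n`. Multiplying out the `2 × 2` block recursions gives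

* `AM_{n+1} = [[AM_n, 0], [AM_n, -(AM_n + BM_n)]]`,
* `BM_{n+1} = [[AM_n, 0], [0, -BM_n]]`.

Both matrices are then determined in closed form by a simultaneous induction on `n`
(`AM_BM_formula`). Let `w I R = (|R| + 1) ^ c` be the weight of a run, and let `(m, n]` be the run of
`J` which ends at `n`, with `m = n` (an empty run) when `n ∉ J`. Then, for `J ⊆ I`,

* `AM_n I J = (-1) ^ |J| * ∏ w I R` over all runs `R` of `J`;
* `BM_n I J` is `0` if `m ∈ I`, and otherwise `(-1) ^ |J| * ∏ w I R` over the runs other than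
  `(m, n]`;

and both entries vanish if `J ⊄ I`. The combinatorial input is that adjoining `n + 1` to `J ⊆ [n]`
lengthens the run ending at `n` by one element and leaves the other runs alone (`runOf_insert`,
`runsOf_insert_erase`). The only arithmetic is in the lower right block of `AM_{n+1}`: if `m ∉ I`,
the weight `n - m + 1` of `(m, n]` and the weight `1` coming from `BM_n` add up to the weight
`n - m + 2` of `(m, n + 1]`; if `m ∈ I` the weights of `(m, n]` and `(m, n + 1]` are both `1` and
`BM_n` contributes nothing. As empty runs have weight `1`, the case `n ∉ J` needs no separate
treatment. -/


open Finset

/-- Restriction of a subset of `Fin (n+1)` to `Fin n` (forgetting the top element). -/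
def resSet {n : ℕ} (I : Finset (Fin (n + 1))) : Finset (Fin n) :=
  Finset.univ.filter (fun j : Fin n => Fin.castSucc j ∈ I)

mutual
  /-- The matrix `A_n`, rows/columns indexed by subsets of `{1,…,n}` (element `j`
  of `[n]` corresponds to `j-1 : Fin n`, i.e. anti-lexicographic/binary order). -/
  def Amat : (n : ℕ) → Matrix (Finset (Fin n)) (Finset (Fin n)) ℤ
    | 0 => Matrix.of fun _ _ => 1
    | n + 1 => Matrix.of fun I J =>
        if Fin.last n ∈ I then
          if Fin.last n ∈ J then - Bmat n (resSet I) (resSet J)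
          else Amat n (resSet I) (resSet J)
        else Amat n (resSet I) (resSet J)
  /-- The matrix `B_n`. -/
  def Bmat : (n : ℕ) → Matrix (Finset (Fin n)) (Finset (Fin n)) ℤ
    | 0 => Matrix.of fun _ _ => 1
    | n + 1 => Matrix.of fun I J =>
        if Fin.last n ∈ I then
          if Fin.last n ∈ J then - Bmat n (resSet I) (resSet J)
          else 0
        else Amat n (resSet I) (resSet J)
end

/-- The Walsh-Hadamard matrix `H_n`. -/
def Hmat : (n : ℕ) → Matrix (Finset (Fin n)) (Finset (Fin n)) ℤ
  | 0 => Matrix.of fun _ _ => 1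
  | n + 1 => Matrix.of fun I J =>
      if Fin.last n ∈ I ∧ Fin.last n ∈ J then - Hmat n (resSet I) (resSet J)
      else Hmat n (resSet I) (resSet J)

/-- The Möbius matrix `M_n` of the boolean lattice. -/
def Mobmat (n : ℕ) : Matrix (Finset (Fin n)) (Finset (Fin n)) ℤ :=
  Matrix.of fun I J => if I ⊆ J then (-1) ^ (J \ I).card else 0

/-- The zeta matrix `Z_n` of the boolean lattice. -/
def Zetamat (n : ℕ) : Matrix (Finset (Fin n)) (Finset (Fin n)) ℤ :=
  Matrix.of fun I J => if I ⊆ J then 1 else 0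

/-- The subset of `[n] = {1,…,n}` corresponding to a subset of `Fin n`. -/
def natSet {n : ℕ} (I : Finset (Fin n)) : Finset ℕ := Finset.image (fun j : Fin n => (j : ℕ) + 1) I

/-- The ordinal number of a subset in the anti-lexicographic order. -/
def ordFin {n : ℕ} (I : Finset (Fin n)) : ℕ := ∑ j ∈ I, 2 ^ (j : ℕ)

/-- The run (maximal interval of consecutive integers) of `I` containing `j`
(empty if `j ∉ I`). -/
def runOf (I : Finset ℕ) (j : ℕ) : Finset ℕ :=
  I.filter (fun i => ∀ k ∈ Finset.Icc (min i j) (max i j), k ∈ I)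

/-- The set of runs (maximal intervals of consecutive integers) of `I`. -/
def runsOf (I : Finset ℕ) : Finset (Finset ℕ) := I.image (runOf I)

/-- `P` is a prefix of the interval `R`: it consists of an initial segment of `R`. -/
def IsPrefixOf (P R : Finset ℕ) : Prop :=
  P ⊆ R ∧ ∀ i ∈ R, ∀ j ∈ P, i ≤ j → i ∈ P

/-! ### Runs of finite sets of natural numbers -/

lemma mem_runOf {J : Finset ℕ} {i j : ℕ} :
    i ∈ runOf J j ↔ i ∈ J ∧ ∀ k, min i j ≤ k → k ≤ max i j → k ∈ J := by
  simp only [runOf, mem_filter, mem_Icc, and_imp]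

lemma self_mem_runOf {J : Finset ℕ} {j : ℕ} (h : j ∈ J) : j ∈ runOf J j := by
  refine mem_runOf.2 ⟨h, fun k h1 h2 => ?_⟩
  obtain rfl : k = j := by omega
  exact h

lemma runOf_eq_empty {J : Finset ℕ} {j : ℕ} (h : j ∉ J) : runOf J j = ∅ := by
  ext i
  simp only [mem_runOf, notMem_empty, iff_false, not_and]
  exact fun _ hk => h (hk j (by omega) (by omega))

lemma runOf_eq_of_mem {J : Finset ℕ} {i j : ℕ} (h : j ∈ runOf J i) :
    runOf J j = runOf J i := by
  rw [mem_runOf] at h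
  ext x
  simp only [mem_runOf]
  -- The interval between two of `i`, `j`, `x` is covered by the two other intervals.
  constructor
  · rintro ⟨hx, hk⟩
    refine ⟨hx, fun k h1 h2 => ?_⟩
    by_cases hc : min x j ≤ k ∧ k ≤ max x j
    · exact hk k hc.1 hc.2
    · exact h.2 k (by omega) (by omega)
  · rintro ⟨hx, hk⟩
    refine ⟨hx, fun k h1 h2 => ?_⟩
    by_cases hc : min x i ≤ k ∧ k ≤ max x i
    · exact hk k hc.1 hc.2
    · exact h.2 k (by omega) (by omega)

lemma runOf_insert {J : Finset ℕ} {n : ℕ} (hJ : ∀ j ∈ J, j ≤ n) :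
    runOf (insert (n + 1) J) (n + 1) = insert (n + 1) (runOf J n) := by
  ext i
  simp only [mem_runOf, mem_insert]
  constructor
  · rintro ⟨rfl | hi, hk⟩
    · exact Or.inl rfl
    · refine Or.inr ⟨hi, fun k h1 h2 => ?_⟩
      have := hJ i hi
      rcases hk k (by omega) (by omega) with h | h
      · omega
      · exact h
  · rintro (rfl | ⟨hi, hk⟩)
    · exact ⟨Or.inl rfl, fun k h1 h2 => Or.inl (by omega)⟩
    · refine ⟨Or.inr hi, fun k h1 h2 => ?_⟩
      have := hJ i hi
      by_cases hkn : k = n + 1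
      · exact Or.inl hkn
      · exact Or.inr (hk k (by omega) (by omega))

lemma runOf_insert_of_notMem {J : Finset ℕ} {n j : ℕ} (hJ : ∀ j ∈ J, j ≤ n) (hj : j ∈ J)
    (hjn : j ∉ runOf J n) : runOf (insert (n + 1) J) j = runOf J j := by
  have hj' := hJ j hj
  ext i
  simp only [mem_runOf, mem_insert]
  constructor
  · rintro ⟨hi, hk⟩
    have hin : i ≠ n + 1 := by
      rintro rfl
      refine hjn (mem_runOf.2 ⟨hj, fun k h1 h2 => ?_⟩)
      exact (hk k (by omega) (by omega)).resolve_left (by omega)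
    have hiJ := hi.resolve_left hin
    have := hJ i hiJ
    exact ⟨hiJ, fun k h1 h2 => (hk k h1 h2).resolve_left (by omega)⟩
  · rintro ⟨hi, hk⟩
    exact ⟨Or.inr hi, fun k h1 h2 => Or.inr (hk k h1 h2)⟩

/-- Adjoining `n + 1` to a subset of `[n]` only affects the run ending at `n`. If `n ∉ J`, the
erased set `runOf J n` is empty, so nothing is erased on the right. -/
lemma runsOf_insert_erase {J : Finset ℕ} {n : ℕ} (hJ : ∀ j ∈ J, j ≤ n) :
    (runsOf (insert (n + 1) J)).erase (runOf (insert (n + 1) J) (n + 1)) =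
      (runsOf J).erase (runOf J n) := by
  ext S
  simp only [runsOf, mem_erase, mem_image, mem_insert, ne_eq]
  constructor
  · rintro ⟨hS, j, rfl | hj, rfl⟩
    · exact absurd rfl hS
    · have hjn : j ∉ runOf J n := fun h =>
        hS (runOf_eq_of_mem (by rw [runOf_insert hJ]; exact mem_insert_of_mem h))
      rw [runOf_insert_of_notMem hJ hj hjn]
      exact ⟨fun h => hjn (h ▸ self_mem_runOf hj), j, hj, rfl⟩
  · rintro ⟨hS, j, hj, rfl⟩
    have hjn : j ∉ runOf J n := fun h => hS (runOf_eq_of_mem h)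
    have hj' := hJ j hj
    rw [← runOf_insert_of_notMem hJ hj hjn]
    refine ⟨fun h => ?_, j, Or.inr hj, rfl⟩
    have : j ∈ runOf (insert (n + 1) J) (n + 1) :=
      h ▸ self_mem_runOf (mem_insert_of_mem hj)
    rw [runOf_insert hJ, mem_insert] at this
    exact this.elim (by omega) hjn

lemma empty_notMem_runsOf (J : Finset ℕ) : ∅ ∉ runsOf J := by
  simp only [runsOf, mem_image, not_exists, not_and]
  intro j hj h
  have := self_mem_runOf hj
  simp [h] at this

lemma erase_runOf_of_notMem {J : Finset ℕ} {n : ℕ} (h : n ∉ J) :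
    (runsOf J).erase (runOf J n) = runsOf J := by
  rw [runOf_eq_empty h, erase_eq_of_notMem (empty_notMem_runsOf J)]

/-- One less than the first element of the run of `J ⊆ [n]` ending at `n`; it is `n` if `n ∉ J`. -/
def runStart (J : Finset ℕ) (n : ℕ) : ℕ := n - (runOf J n).card

lemma runOf_eq_Ioc_aux (n : ℕ) : ∀ J : Finset ℕ, (∀ j ∈ J, 1 ≤ j ∧ j ≤ n) →
    ∃ m ≤ n, runOf J n = Ioc m n := by
  induction n with
  | zero =>
    intro J hJ
    refine ⟨0, le_rfl, ?_⟩
    rw [runOf_eq_empty (fun h => by have := hJ 0 h; omega), Ioc_self]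
  | succ n ih =>
    intro J hJ
    by_cases h : n + 1 ∈ J
    · have hJ' : ∀ j ∈ J.erase (n + 1), 1 ≤ j ∧ j ≤ n := fun j hj => by
        have h1 := hJ j (mem_of_mem_erase hj)
        have h2 := ne_of_mem_erase hj
        omega
      obtain ⟨m, hm, he⟩ := ih _ hJ'
      refine ⟨m, by omega, ?_⟩
      rw [← insert_erase h, runOf_insert (fun j hj => (hJ' j hj).2), he]
      ext x
      simp only [mem_insert, mem_Ioc]
      omega
    · exact ⟨n + 1, le_rfl, by rw [runOf_eq_empty h, Ioc_self]⟩

lemma runOf_eq_Ioc {J : Finset ℕ} {n : ℕ} (hJ : ∀ j ∈ J, 1 ≤ j ∧ j ≤ n) :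
    runStart J n ≤ n ∧ runOf J n = Ioc (runStart J n) n := by
  obtain ⟨m, hm, he⟩ := runOf_eq_Ioc_aux n J hJ
  have : runStart J n = m := by
    rw [runStart, he, Nat.card_Ioc]
    omega
  rw [this]
  exact ⟨hm, he⟩

lemma runStart_of_notMem {J : Finset ℕ} {n : ℕ} (h : n ∉ J) : runStart J n = n := by
  simp [runStart, runOf_eq_empty h]

lemma runStart_insert {J : Finset ℕ} {n : ℕ} (hJ : ∀ j ∈ J, j ≤ n) :
    runStart (insert (n + 1) J) (n + 1) = runStart J n := by
  have : n + 1 ∉ runOf J n := fun h => by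
    have := hJ _ (mem_runOf.1 h).1
    omega
  rw [runStart, runOf_insert hJ, card_insert_of_notMem this, runStart]
  omega

/-! ### Weights of runs -/

/-- The factor contributed by the run `R`: it is `|R| + 1`, or `1` if the element preceding `R`
lies in `I`. The empty run has weight `1`. -/
def runWeight (I R : Finset ℕ) : ℤ :=
  ((R.card : ℤ) + 1) ^ (if R.min.getD 1 - 1 ∈ I then 0 else 1)

lemma min_getD_Ioc {m n : ℕ} (h : m < n) : (Ioc m n).min.getD 1 - 1 = m := by
  have hmin : (Ioc m n).min = ((m + 1 : ℕ) : WithTop ℕ) := by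
    have hm : m + 1 ∈ Ioc m n := mem_Ioc.2 ⟨by omega, by omega⟩
    refine le_antisymm (Finset.min_le hm) (Finset.le_min fun b hb => ?_)
    exact WithTop.coe_le_coe.2 (Nat.succ_le_of_lt (mem_Ioc.1 hb).1)
  rw [hmin]
  rfl

lemma runWeight_Ioc {I : Finset ℕ} {m n : ℕ} (h : m ≤ n) :
    runWeight I (Ioc m n) = if m ∈ I then 1 else (n : ℤ) - m + 1 := by
  rcases h.eq_or_lt with rfl | h
  · simp [runWeight]
  · rw [runWeight, min_getD_Ioc h, Nat.card_Ioc]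
    split_ifs <;> push_cast [h.le] <;> ring

/-- The product of the weights of all runs of `J`. -/
def allProd (I J : Finset ℕ) : ℤ := ∏ R ∈ runsOf J, runWeight I R

/-- The product of the weights of all runs of `J` but the one containing `n`, if there is one. -/
def initProd (I J : Finset ℕ) (n : ℕ) : ℤ :=
  ∏ R ∈ (runsOf J).erase (runOf J n), runWeight I R

lemma initProd_of_notMem {I J : Finset ℕ} {n : ℕ} (h : n ∉ J) :
    initProd I J n = allProd I J := by
  rw [initProd, erase_runOf_of_notMem h, allProd]

lemma allProd_eq_mul {I J : Finset ℕ} {n : ℕ} :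
    allProd I J = runWeight I (runOf J n) * initProd I J n := by
  by_cases h : n ∈ J
  · exact (mul_prod_erase _ _ (mem_image_of_mem _ h)).symm
  · rw [initProd_of_notMem h, runOf_eq_empty h]
    simp [runWeight]

lemma initProd_insert {I J : Finset ℕ} {n : ℕ} (hJ : ∀ j ∈ J, j ≤ n) :
    initProd I (insert (n + 1) J) (n + 1) = initProd I J n := by
  rw [initProd, runsOf_insert_erase hJ, initProd]

/-- The element preceding a run of `J ⊆ [n]` is at most `n`, so membership of `n + 1` in `I` does
not affect the weights. -/
lemma runWeight_insert {I J R : Finset ℕ} {n : ℕ} (hJ : ∀ j ∈ J, j ≤ n) (hR : R ∈ runsOf J) :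
    runWeight (insert (n + 1) I) R = runWeight I R := by
  obtain ⟨j, hj, rfl⟩ := mem_image.1 hR
  have h1 : ∃ x ∈ J, (runOf J j).min = (x : WithTop ℕ) := by
    obtain ⟨x, hx⟩ := min_of_mem (self_mem_runOf hj)
    exact ⟨x, (mem_runOf.1 (mem_of_min hx)).1, hx⟩
  obtain ⟨x, hx, he⟩ := h1
  have h2 : (runOf J j).min.getD 1 - 1 ≠ n + 1 := by
    rw [he]
    change x - 1 ≠ n + 1
    have := hJ x hx
    omega
  simp only [runWeight, mem_insert, h2, false_or]

lemma allProd_insert_left {I J : Finset ℕ} {n : ℕ} (hJ : ∀ j ∈ J, j ≤ n) :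
    allProd (insert (n + 1) I) J = allProd I J :=
  prod_congr rfl fun _ hR => runWeight_insert hJ hR

lemma initProd_insert_left {I J : Finset ℕ} {n : ℕ} (hJ : ∀ j ∈ J, j ≤ n) :
    initProd (insert (n + 1) I) J n = initProd I J n :=
  prod_congr rfl fun _ hR => runWeight_insert hJ (mem_of_mem_erase hR)

/-! ### Splitting off the largest element -/

/-- A subset of `Fin n`, viewed as a subset of `Fin (n + 1)`. -/
def liftSet {n : ℕ} (K : Finset (Fin n)) : Finset (Fin (n + 1)) := K.map Fin.castSuccEmb

lemma mem_resSet {n : ℕ} {I : Finset (Fin (n + 1))} {j : Fin n} :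
    j ∈ resSet I ↔ j.castSucc ∈ I := by
  simp [resSet]

lemma castSucc_mem_liftSet {n : ℕ} {K : Finset (Fin n)} {j : Fin n} :
    j.castSucc ∈ liftSet K ↔ j ∈ K := by
  simp [liftSet]

lemma last_notMem_liftSet {n : ℕ} (K : Finset (Fin n)) : Fin.last n ∉ liftSet K := by
  simp [liftSet, Fin.castSucc_ne_last]

lemma resSet_liftSet {n : ℕ} (K : Finset (Fin n)) : resSet (liftSet K) = K := by
  ext j
  rw [mem_resSet, castSucc_mem_liftSet]

lemma resSet_insert {n : ℕ} (K : Finset (Fin n)) :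
    resSet (insert (Fin.last n) (liftSet K)) = K := by
  ext j
  simp [mem_resSet, castSucc_mem_liftSet, Fin.castSucc_ne_last]

lemma liftSet_resSet {n : ℕ} {K : Finset (Fin (n + 1))} (h : Fin.last n ∉ K) :
    liftSet (resSet K) = K := by
  ext j
  refine Fin.lastCases ?_ (fun i => ?_) j
  · simp [h, last_notMem_liftSet]
  · rw [castSucc_mem_liftSet, mem_resSet]

lemma insert_liftSet_resSet {n : ℕ} {K : Finset (Fin (n + 1))} (h : Fin.last n ∈ K) :
    insert (Fin.last n) (liftSet (resSet K)) = K := by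
  ext j
  refine Fin.lastCases ?_ (fun i => ?_) j
  · simp [h]
  · simp [castSucc_mem_liftSet, mem_resSet, Fin.castSucc_ne_last]

lemma sum_finset_fin_succ {n : ℕ} (f : Finset (Fin (n + 1)) → ℤ) :
    ∑ K, f K = ∑ K, f (liftSet K) + ∑ K, f (insert (Fin.last n) (liftSet K)) := by
  rw [← sum_filter_not_add_sum_filter univ (fun K => Fin.last n ∈ K)]
  congr 1
  · refine sum_nbij' resSet liftSet (by simp) (by simp [last_notMem_liftSet]) ?_
      (by simp [resSet_liftSet]) ?_
    · intro K hK
      exact liftSet_resSet (mem_filter.1 hK).2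
    · intro K hK
      rw [liftSet_resSet (mem_filter.1 hK).2]
  · refine sum_nbij' resSet (fun K => insert (Fin.last n) (liftSet K)) (by simp) (by simp) ?_
      (by simp [resSet_insert]) ?_
    · intro K hK
      exact insert_liftSet_resSet (mem_filter.1 hK).2
    · intro K hK
      rw [insert_liftSet_resSet (mem_filter.1 hK).2]

lemma liftSet_subset {n : ℕ} {K L : Finset (Fin n)} : liftSet K ⊆ liftSet L ↔ K ⊆ L :=
  map_subset_map

lemma liftSet_subset_insert {n : ℕ} {K L : Finset (Fin n)} :
    liftSet K ⊆ insert (Fin.last n) (liftSet L) ↔ K ⊆ L := by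
  rw [subset_insert_iff_of_notMem (last_notMem_liftSet K), liftSet_subset]

lemma liftSet_sdiff {n : ℕ} (K L : Finset (Fin n)) :
    liftSet L \ liftSet K = liftSet (L \ K) := by
  simp only [liftSet, Finset.map_sdiff]

lemma card_liftSet {n : ℕ} (K : Finset (Fin n)) : (liftSet K).card = K.card := card_map _

lemma Mobmat_lift_lift {n : ℕ} (K L : Finset (Fin n)) :
    Mobmat (n + 1) (liftSet K) (liftSet L) = Mobmat n K L := by
  simp only [Mobmat, Matrix.of_apply, liftSet_subset, liftSet_sdiff, card_liftSet]

lemma Mobmat_lift_insert {n : ℕ} (K L : Finset (Fin n)) :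
    Mobmat (n + 1) (liftSet K) (insert (Fin.last n) (liftSet L)) = -Mobmat n K L := by
  simp only [Mobmat, Matrix.of_apply, liftSet_subset_insert,
    insert_sdiff_of_notMem _ (last_notMem_liftSet K), liftSet_sdiff,
    card_insert_of_notMem (last_notMem_liftSet _), card_liftSet, pow_succ]
  split_ifs <;> simp

lemma Mobmat_insert_lift {n : ℕ} (K L : Finset (Fin n)) :
    Mobmat (n + 1) (insert (Fin.last n) (liftSet K)) (liftSet L) = 0 := by
  simp only [Mobmat, Matrix.of_apply]
  rw [if_neg]
  exact fun h => last_notMem_liftSet L (h (mem_insert_self _ _))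

lemma Mobmat_insert_insert {n : ℕ} (K L : Finset (Fin n)) :
    Mobmat (n + 1) (insert (Fin.last n) (liftSet K)) (insert (Fin.last n) (liftSet L)) =
      Mobmat n K L := by
  simp only [Mobmat, Matrix.of_apply, insert_sdiff_insert,
    insert_subset_insert_iff (last_notMem_liftSet K), liftSet_subset,
    sdiff_insert_of_notMem (last_notMem_liftSet L), liftSet_sdiff, card_liftSet]

/-- The product `X * M_{n+1}` in block form, in a column not containing the largest element. -/
lemma mul_Mobmat_lift {n : ℕ} (X : Matrix (Finset (Fin (n + 1))) (Finset (Fin (n + 1))) ℤ)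
    (I : Finset (Fin (n + 1))) (L : Finset (Fin n)) :
    (X * Mobmat (n + 1)) I (liftSet L) = ∑ K, X I (liftSet K) * Mobmat n K L := by
  rw [Matrix.mul_apply, sum_finset_fin_succ]
  simp [Mobmat_lift_lift, Mobmat_insert_lift]

/-- The product `X * M_{n+1}` in block form, in a column containing the largest element. -/
lemma mul_Mobmat_insert {n : ℕ} (X : Matrix (Finset (Fin (n + 1))) (Finset (Fin (n + 1))) ℤ)
    (I : Finset (Fin (n + 1))) (L : Finset (Fin n)) :
    (X * Mobmat (n + 1)) I (insert (Fin.last n) (liftSet L)) =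
      ∑ K, (X I (insert (Fin.last n) (liftSet K)) - X I (liftSet K)) * Mobmat n K L := by
  rw [Matrix.mul_apply, sum_finset_fin_succ, ← sum_add_distrib]
  refine sum_congr rfl fun K _ => ?_
  rw [Mobmat_lift_insert, Mobmat_insert_insert]
  ring

/-! ### Block recursions for the two products -/

lemma AM_succ {n : ℕ} (I J : Finset (Fin (n + 1))) :
    (Amat (n + 1) * Mobmat (n + 1)) I J =
      if Fin.last n ∈ J then
        if Fin.last n ∈ I then
          -((Amat n * Mobmat n) (resSet I) (resSet J) + (Bmat n * Mobmat n) (resSet I) (resSet J))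
        else 0
      else (Amat n * Mobmat n) (resSet I) (resSet J) := by
  by_cases hJ : Fin.last n ∈ J
  · rw [← insert_liftSet_resSet hJ, mul_Mobmat_insert]
    by_cases hI : Fin.last n ∈ I
    · simp only [Amat, Matrix.of_apply, hI, last_notMem_liftSet, resSet_liftSet, resSet_insert,
        mem_insert_self, if_true, if_false, Matrix.mul_apply]
      rw [← sum_add_distrib, ← sum_neg_distrib]
      exact sum_congr rfl fun K _ => by ring
    · simp [Amat, hI, last_notMem_liftSet, resSet_liftSet, resSet_insert]
  · rw [← liftSet_resSet hJ, mul_Mobmat_lift]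
    simp [Amat, last_notMem_liftSet, resSet_liftSet, Matrix.mul_apply]

lemma BM_succ {n : ℕ} (I J : Finset (Fin (n + 1))) :
    (Bmat (n + 1) * Mobmat (n + 1)) I J =
      if Fin.last n ∈ J then
        if Fin.last n ∈ I then -(Bmat n * Mobmat n) (resSet I) (resSet J) else 0
      else if Fin.last n ∈ I then 0 else (Amat n * Mobmat n) (resSet I) (resSet J) := by
  by_cases hJ : Fin.last n ∈ J
  · rw [← insert_liftSet_resSet hJ, mul_Mobmat_insert]
    by_cases hI : Fin.last n ∈ I
    · simp [Bmat, hI, last_notMem_liftSet, resSet_insert, Matrix.mul_apply]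
    · simp [Bmat, hI, last_notMem_liftSet, resSet_liftSet, resSet_insert]
  · rw [← liftSet_resSet hJ, mul_Mobmat_lift]
    by_cases hI : Fin.last n ∈ I <;>
      simp [Bmat, hI, last_notMem_liftSet, resSet_liftSet, Matrix.mul_apply]

/-! ### Closed form of the entries -/

lemma natSet_bounds {n : ℕ} (I : Finset (Fin n)) : ∀ j ∈ natSet I, 1 ≤ j ∧ j ≤ n := by
  intro j hj
  obtain ⟨i, _, rfl⟩ := mem_image.1 hj
  omega

lemma natSet_liftSet {n : ℕ} (K : Finset (Fin n)) : natSet (liftSet K) = natSet K := by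
  ext x
  simp [natSet, liftSet]

lemma natSet_of_last_mem {n : ℕ} {I : Finset (Fin (n + 1))} (h : Fin.last n ∈ I) :
    natSet I = insert (n + 1) (natSet (resSet I)) := by
  conv_lhs => rw [← insert_liftSet_resSet h]
  rw [← natSet_liftSet (resSet I)]
  simp [natSet, image_insert]

lemma natSet_of_last_notMem {n : ℕ} {I : Finset (Fin (n + 1))} (h : Fin.last n ∉ I) :
    natSet I = natSet (resSet I) := by
  conv_lhs => rw [← liftSet_resSet h]
  rw [natSet_liftSet]

lemma card_natSet {n : ℕ} (I : Finset (Fin n)) : (natSet I).card = I.card :=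
  card_image_of_injective _ fun a b h => Fin.ext (by simpa using h)

/-- The closed form of `AM_n` in terms of subsets of `[n]`. -/
def AMval (I J : Finset ℕ) : ℤ :=
  if J ⊆ I then (-1) ^ J.card * allProd I J else 0

/-- The closed form of `BM_n` in terms of subsets of `[n]`. For `J ⊆ I`, the condition
`runStart J n ∉ I` says that the largest elements of `{0, …, n}` outside `I` and outside `J`
agree. -/
def BMval (n : ℕ) (I J : Finset ℕ) : ℤ :=
  if J ⊆ I ∧ runStart J n ∉ I then (-1) ^ J.card * initProd I J n else 0

/-- The combinatorial form of the lower right block of the recursion for `AM_{n+1}`. -/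
lemma AMval_insert_insert {n : ℕ} {I J : Finset ℕ}
    (hJ : ∀ j ∈ J, 1 ≤ j ∧ j ≤ n) :
    AMval (insert (n + 1) I) (insert (n + 1) J) = -(AMval I J + BMval n I J) := by
  have hJ' : ∀ j ∈ J, j ≤ n := fun j hj => (hJ j hj).2
  have hnJ : n + 1 ∉ J := fun h => by have := hJ' _ h; omega
  have hJb : ∀ j ∈ insert (n + 1) J, 1 ≤ j ∧ j ≤ n + 1 := fun j hj => by
    rcases mem_insert.1 hj with rfl | hj
    · omega
    · have := hJ j hj
      omega
  obtain ⟨hm, hr⟩ := runOf_eq_Ioc hJ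
  obtain ⟨hm', hr'⟩ := runOf_eq_Ioc hJb
  rw [runStart_insert hJ'] at hm' hr'
  have hmem : runStart J n ∈ insert (n + 1) I ↔ runStart J n ∈ I := by
    rw [mem_insert]
    exact or_iff_right (by omega)
  by_cases hs : J ⊆ I
  · rw [AMval, AMval, BMval, if_pos ((insert_subset_insert_iff hnJ).2 hs), if_pos hs,
      allProd_eq_mul (n := n + 1), initProd_insert hJ', initProd_insert_left hJ',
      allProd_eq_mul (n := n), hr, hr', runWeight_Ioc hm, runWeight_Ioc hm',
      card_insert_of_notMem hnJ]
    by_cases h : runStart J n ∈ I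
    · simp only [hmem, h, hs, if_true, not_true, and_false, if_false]
      ring
    · simp only [hmem, h, hs, if_false, not_false_iff, and_true, if_true]
      push_cast
      ring
  · rw [AMval, AMval, BMval, if_neg (fun h => hs ((insert_subset_insert_iff hnJ).1 h)),
      if_neg hs, if_neg (fun h => hs h.1)]
    ring

lemma BMval_insert_insert {n : ℕ} {I J : Finset ℕ} (hJ : ∀ j ∈ J, j ≤ n) :
    BMval (n + 1) (insert (n + 1) I) (insert (n + 1) J) = -BMval n I J := by
  have hnJ : n + 1 ∉ J := fun h => by have := hJ _ h; omega
  have hm : runStart J n ≤ n := Nat.sub_le _ _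
  have hmem : runStart J n ∈ insert (n + 1) I ↔ runStart J n ∈ I := by
    rw [mem_insert]
    exact or_iff_right (by omega)
  simp only [BMval, runStart_insert hJ, hmem, insert_subset_insert_iff hnJ, initProd_insert hJ,
    initProd_insert_left hJ, card_insert_of_notMem hnJ]
  split_ifs <;> ring

/-- The induction is simultaneous because each recursion involves both products. -/
theorem AM_BM_formula (n : ℕ) : ∀ I J : Finset (Fin n),
    (Amat n * Mobmat n) I J = AMval (natSet I) (natSet J) ∧
    (Bmat n * Mobmat n) I J = BMval n (natSet I) (natSet J) := by
  induction n with
  | zero =>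
    intro I J
    obtain rfl : I = ∅ := Subsingleton.elim _ _
    obtain rfl : J = ∅ := Subsingleton.elim _ _
    simp [Matrix.mul_apply, Amat, Bmat, Mobmat, AMval, BMval, natSet, allProd, initProd, runsOf]
  | succ n ih =>
    intro I J
    obtain ⟨ihA, ihB⟩ := ih (resSet I) (resSet J)
    have bI : ∀ j ∈ natSet (resSet I), j ≤ n := fun j hj => (natSet_bounds _ j hj).2
    have bJ : ∀ j ∈ natSet (resSet J), j ≤ n := fun j hj => (natSet_bounds _ j hj).2
    have nI : n + 1 ∉ natSet (resSet I) := fun h => by have := bI _ h; omega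
    have nJ : n + 1 ∉ natSet (resSet J) := fun h => by have := bJ _ h; omega
    rw [AM_succ, BM_succ, ihA, ihB]
    by_cases hJ : Fin.last n ∈ J <;> by_cases hI : Fin.last n ∈ I
    · rw [natSet_of_last_mem hJ, natSet_of_last_mem hI,
        AMval_insert_insert (natSet_bounds _), BMval_insert_insert bJ]
      simp [hJ, hI]
    · rw [natSet_of_last_mem hJ, natSet_of_last_notMem hI]
      simp [hJ, hI, AMval, BMval, insert_subset_iff, nI]
    · rw [natSet_of_last_notMem hJ, natSet_of_last_mem hI]
      simp [hJ, hI, AMval, BMval, runStart_of_notMem nJ, subset_insert_iff_of_notMem nJ,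
        allProd_insert_left bJ]
    · rw [natSet_of_last_notMem hJ, natSet_of_last_notMem hI]
      simp [hJ, hI, AMval, BMval, runStart_of_notMem nJ, nI, initProd_of_notMem nJ]

/-- Entries of `BM_n = B_n · M_n`: if `(BM_n)_{I,J} ≠ 0` then
`(BM_n)_{I,J} = (−1)^{|J|} ∏_{k=1}^{t′} (|J_k|+1)^{c_k(I)}`, where `J_k` are the runs
of `J`, `m_k = min J_k − 1`, `c_k(I) = 0` if `m_k ∈ I` and `1` otherwise, and where
the last run (the one containing `n`) is omitted when `n ∈ I`. -/
theorem BM_entries (n : ℕ) (I J : Finset (Fin n)) (h : (Bmat n * Mobmat n) I J ≠ 0) :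
    (Bmat n * Mobmat n) I J =
      (-1) ^ J.card *
        ∏ R ∈ (if n ∈ natSet I then (runsOf (natSet J)).erase (runOf (natSet J) n)
               else runsOf (natSet J)),
          ((R.card : ℤ) + 1) ^ (if R.min.getD 1 - 1 ∈ natSet I then 0 else 1) := by
  rw [(AM_BM_formula n I J).2, BMval] at h ⊢
  split_ifs at h ⊢ with hc hn
  · rw [card_natSet]
    rfl
    -- In the remaining case `n ∉ J` as well, so no run is dropped from `initProd`.
  · rw [card_natSet, initProd_of_notMem (fun hJ => hn (hc.1 hJ))]
    rfl
  all_goals exact absurd rfl h
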